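/- Let P(x,y,z) be a Laurent polynomial with A_±, B_±, C_± all nonzero whose associated involutions satisfy φ_xφ_y = φ_yφ_x and φ_xφ_z = φ_zφ_x, and suppose none of A_- /A_+, B_- /B_+, C_- /C_+ is constant. Then ∂/∂x (B_-(x,z)/B_+(x,z)) = 0 and ∂/∂x (C_-(x,y)/C_+(x,y)) = 0, i.e., both ratios are independent of x. -/

import Mathlib

open MvPolynomial

noncomputable section

/-- The field `ℚ(x,y,z)` of rational functions in three variables. -/
abbrev Fld : Type := FractionRing (MvPolynomial (Fin 3) ℚ)

/-- The variables `x = Xv 0`, `y = Xv 1`, `z = Xv 2` of `ℚ(x,y,z)`. -/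
def Xv (i : Fin 3) : Fld := algebraMap (MvPolynomial (Fin 3) ℚ) Fld (X i)

/-- The value at `(a,b)` of the bivariate Laurent polynomial `p/(s^m t^n)`. -/
def lv (p : MvPolynomial (Fin 2) ℚ) (m n : ℕ) (a b : Fld) : Fld :=
  aeval ![a, b] p / (a ^ m * b ^ n)

/-- The value at `a` of the univariate Laurent polynomial `p/s^m`. -/
def lv1 (p : Polynomial ℚ) (m : ℕ) (a : Fld) : Fld :=
  Polynomial.aeval a p / a ^ m

/-- The value at `(a,b)` of the ratio of two bivariate Laurent polynomials. -/
def lratio (p : MvPolynomial (Fin 2) ℚ) (mp np : ℕ) (q : MvPolynomial (Fin 2) ℚ)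
    (mq nq : ℕ) (a b : Fld) : Fld :=
  lv p mp np a b / lv q mq nq a b

/-!
Write `a = A₋/A₊`, a function of `(y, z)`, and let `D_y`, `D_z` be the numerators of `∂a/∂y` and
`∂a/∂z`. Invariance under `φ_y` says `a(y, z) = a(b/y, z)` with `b = B₋/B₊`. Applying `∂/∂x`, which
kills `a`, `y` and `z`, gives `0 = a_y(b/y, z) · b_x / y`; since `b/y` and `z` are algebraically
independent (Jacobian criterion), `D_y ≠ 0` forces `b_x = 0`. Likewise `D_z ≠ 0` forces `c_x = 0`
for `c = C₋/C₊`. Both do hold: if `D_y = 0`, then `D_z ≠ 0` because `a` is not constant, and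
`∂/∂y` also kills `a = a(y, c/z)`, so `c_y = 0` as well and `c` would be constant; the case
`D_z = 0` is symmetric.
-/

section Polynomial

variable {σ R : Type*}

lemma totalDegree_pderiv_lt [CommSemiring R] {i : σ} {p : MvPolynomial σ R}
    (h : pderiv i p ≠ 0) : (pderiv i p).totalDegree < p.totalDegree := by
  have degree_lt : ∀ m ∈ (pderiv i p).support, (m.sum fun _ e ↦ e) < p.totalDegree := by
    intro m hm
    rw [mem_support_iff, coeff_pderiv] at hm
    have hle := le_totalDegree (mem_support_iff.2 (left_ne_zero_of_mul hm))
    rw [Finsupp.sum_add_index' (by simp) (by simp)] at hle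
    simpa using hle
  obtain ⟨m, hm⟩ := support_nonempty.2 h
  rw [totalDegree, Finset.sup_lt_iff (Nat.zero_lt_of_lt (degree_lt m hm))]
  exact degree_lt

lemma eq_C_of_forall_pderiv_eq_zero [CommRing R] [NoZeroDivisors R] [CharZero R]
    {p : MvPolynomial σ R} (h : ∀ i, pderiv i p = 0) : p = C (coeff 0 p) := by
  classical
  ext m
  rw [coeff_C]
  split_ifs with hm
  · rw [hm]
  obtain ⟨i, hi⟩ := Finsupp.ne_iff.1 (Ne.symm hm)
  have hcoeff := coeff_pderiv (i := i) p (m - Finsupp.single i 1)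
  rw [h i, coeff_zero, tsub_add_cancel_of_le
    (Finsupp.single_le_iff.2 (Nat.one_le_iff_ne_zero.2 hi))] at hcoeff
  exact (mul_eq_zero.1 hcoeff.symm).resolve_right (Nat.cast_add_one_ne_zero _)

/-- The numerator `q ∂ᵢp - p ∂ᵢq` of the partial derivative `∂ᵢ(p / q)`. -/
def mvWronskian [CommRing R] (i : σ) (p q : MvPolynomial σ R) : MvPolynomial σ R :=
  q * pderiv i p - p * pderiv i q

lemma mvWronskian_mul_mul [CommRing R] (i : σ) (c p q : MvPolynomial σ R) :
    mvWronskian i (c * p) (c * q) = c ^ 2 * mvWronskian i p q := by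
  simp only [mvWronskian, Derivation.leibniz, smul_eq_mul]
  ring

lemma pderiv_eq_zero_of_dvd [CommRing R] [IsDomain R] {i : σ} {q : MvPolynomial σ R}
    (h : q ∣ pderiv i q) : pderiv i q = 0 := by
  by_contra hne
  exact (totalDegree_pderiv_lt hne).not_ge (totalDegree_le_of_dvd_of_isDomain h hne)

lemma exists_eq_C_mul_of_forall_mvWronskian_eq_zero {k : Type*} [Field k] [CharZero k]
    {p q : MvPolynomial σ k} (hq : q ≠ 0) (h : ∀ i, mvWronskian i p q = 0) :
    ∃ c, p = C c * q := by
  obtain ⟨p, q, g, hpq, rfl, rfl⟩ :=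
    UniqueFactorizationMonoid.exists_reduced_factors' p q hq
  obtain ⟨hg, hq⟩ := mul_ne_zero_iff.1 hq
  have hW (i) : q * pderiv i p = p * pderiv i q := by
    have := h i
    rw [mvWronskian_mul_mul] at this
    exact sub_eq_zero.1 ((mul_eq_zero.1 this).resolve_left (pow_ne_zero 2 hg))
  have hdq (i) : pderiv i q = 0 :=
    pderiv_eq_zero_of_dvd (hpq.symm.dvd_of_dvd_mul_left ⟨_, (hW i).symm⟩)
  have hdp (i) : pderiv i p = 0 := by
    have := hW i
    rw [hdq, mul_zero] at this
    exact (mul_eq_zero.1 this).resolve_left hq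
  obtain ⟨a, rfl⟩ : ∃ a, p = C a := ⟨_, eq_C_of_forall_pderiv_eq_zero hdp⟩
  obtain ⟨b, rfl⟩ : ∃ b, q = C b := ⟨_, eq_C_of_forall_pderiv_eq_zero hdq⟩
  have hb : b ≠ 0 := by rintro rfl; exact hq C_0
  exact ⟨a / b, by rw [mul_left_comm, ← C_mul, div_mul_cancel₀ a hb]⟩

end Polynomial

section Jacobian

variable {σ R A : Type*} [CommRing R] [CommRing A] [Algebra R A]

lemma derivation_aeval [Fintype σ] {M : Type*} [AddCommGroup M] [Module A M] [Module R M]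
    (δ : Derivation R A M) (f : σ → A) (p : MvPolynomial σ R) :
    δ (aeval f p) = ∑ j, aeval f (pderiv j p) • δ (f j) := by
  classical
  induction p using MvPolynomial.induction_on with
  | C a => simp
  | add p q hp hq => simp only [map_add, hp, hq, add_smul, Finset.sum_add_distrib]
  | mul_X p i hp =>
    simp only [map_mul, aeval_X, Derivation.leibniz, hp, smul_eq_mul, map_add, pderiv_X, add_smul,
      Finset.sum_add_distrib, Finset.smul_sum, mul_smul]
    simp [Pi.single_apply, apply_ite (aeval f)]

/-- The Jacobian matrix `(δᵢ fⱼ)` of a family of elements with respect to a family of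
derivations. -/
def jacobian (δ : σ → Derivation R A A) (f : σ → A) : Matrix σ σ A :=
  Matrix.of fun i j ↦ δ i (f j)

lemma jacobian_update [DecidableEq σ] (δ : σ → Derivation R A A) (f : σ → A) (i : σ) (a : A) :
    jacobian δ (Function.update f i a) = (jacobian δ f).updateCol i fun j ↦ δ j a := by
  ext j l
  rcases eq_or_ne l i with rfl | hl
  · simp [jacobian]
  · simp [jacobian, hl]

lemma algebraicIndependent_of_det_jacobian_ne_zero [Fintype σ] [DecidableEq σ]
    [CharZero R] [FaithfulSMul R A] [IsDomain A]
    {δ : σ → Derivation R A A} {f : σ → A} (h : (jacobian δ f).det ≠ 0) :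
    AlgebraicIndependent R f := by
  have : IsDomain R := (FaithfulSMul.algebraMap_injective R A).isDomain
  rw [algebraicIndependent_iff]
  intro p hp
  induction hn : p.totalDegree using Nat.strong_induction_on generalizing p with
  | _ n ih =>
  have hker : (jacobian δ f).mulVec (fun j ↦ aeval f (pderiv j p)) = 0 := by
    ext i
    have := derivation_aeval (δ i) f p
    rw [hp, map_zero] at this
    simpa [Matrix.mulVec, dotProduct, jacobian, mul_comm] using this.symm
  have hpderiv (i) : pderiv i p = 0 := by
    by_contra hne
    exact hne (ih _ (hn ▸ totalDegree_pderiv_lt hne) _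
      (congrFun (Matrix.eq_zero_of_mulVec_eq_zero h hker) i) rfl)
  rw [eq_C_of_forall_pderiv_eq_zero hpderiv] at hp ⊢
  rw [aeval_C, FaithfulSMul.algebraMap_eq_zero_iff] at hp
  rw [hp, C_0]

/-- The derivations `δᵢ` behave as the partial derivatives `∂/∂fᵢ` on the elements `fⱼ`. -/
def IsDual [DecidableEq σ] (δ : σ → Derivation R A A) (f : σ → A) : Prop :=
  jacobian δ f = 1

namespace IsDual

variable [DecidableEq σ] {δ : σ → Derivation R A A} {f : σ → A}

lemma apply_self (h : IsDual δ f) (i : σ) : δ i (f i) = 1 :=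
  (congrFun₂ h i i).trans (Matrix.one_apply_eq i)

lemma apply_of_ne (h : IsDual δ f) {i j : σ} (hij : i ≠ j) : δ i (f j) = 0 :=
  (congrFun₂ h i j).trans (Matrix.one_apply_ne hij)

lemma pair (h : IsDual δ f) {i j : σ} (hij : i ≠ j) : IsDual ![δ i, δ j] ![f i, f j] := by
  ext a b
  fin_cases a <;> fin_cases b <;>
    simp [jacobian, h.apply_self, h.apply_of_ne hij, h.apply_of_ne hij.symm]

lemma ne_zero [Nontrivial A] (h : IsDual δ f) (i : σ) : f i ≠ 0 := by
  intro hi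
  simpa [hi] using h.apply_self i

variable [Finite σ] [CharZero R] [FaithfulSMul R A] [IsDomain A]

lemma algebraicIndependent_update (h : IsDual δ f) {i : σ} {a : A} (ha : δ i a ≠ 0) :
    AlgebraicIndependent R (Function.update f i a) := by
  cases nonempty_fintype σ
  refine algebraicIndependent_of_det_jacobian_ne_zero (δ := δ) ?_
  rwa [jacobian_update, h, ← Matrix.cramer_apply, Matrix.cramer_one]

lemma algebraicIndependent (h : IsDual δ f) : AlgebraicIndependent R f := by
  cases nonempty_fintype σ
  refine algebraicIndependent_of_det_jacobian_ne_zero (δ := δ) ?_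
  rw [h, Matrix.det_one]
  exact one_ne_zero

end IsDual

open KaehlerDifferential in
lemma exists_derivation_extending {S : Type*} [CommRing S] [Algebra R S] [Algebra A S]
    [IsScalarTower R A S] (M : Submonoid A) [IsLocalization M S] {N : Type*} [AddCommGroup N]
    [Module R N] [Module A N] [Module S N] [IsScalarTower R A N] [IsScalarTower R S N]
    [IsScalarTower A S N] (δ : Derivation R A N) :
    ∃ δ' : Derivation R S N, ∀ a, δ' (algebraMap A S a) = δ a := by
  have := Algebra.FormallyEtale.of_isLocalization (Rₘ := S) M
  have hbc := isBaseChange_of_formallyEtale R A S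
  refine ⟨(hbc.lift δ.liftKaehlerDifferential).compDer (D R S), fun a ↦ ?_⟩
  have := hbc.lift_eq δ.liftKaehlerDifferential (D R A a)
  rwa [map_D, Derivation.liftKaehlerDifferential_comp_D] at this

lemma exists_isDual_X {K : Type*} [Field K] [Algebra R K] [Algebra (MvPolynomial σ R) K]
    [IsScalarTower R (MvPolynomial σ R) K] [IsFractionRing (MvPolynomial σ R) K]
    [DecidableEq σ] :
    ∃ δ : σ → Derivation R K K, IsDual δ fun i ↦ algebraMap (MvPolynomial σ R) K (X i) := by
  choose δ hδ using fun i ↦ exists_derivation_extending (S := K)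
    (nonZeroDivisors (MvPolynomial σ R)) (mkDerivation R (Pi.single i (1 : K)))
  refine ⟨δ, ?_⟩
  ext i j
  simp [jacobian, hδ, mkDerivation_X, Matrix.one_apply, Pi.single_apply, eq_comm]

end Jacobian

section Ratio

variable {σ k K : Type*} [Field k] [Field K] [Algebra k K]

/-- The value at `f` of the rational function `p / q`; it is `0` if `q` vanishes at `f`. -/
def ratioAt (p q : MvPolynomial σ k) (f : σ → K) : K :=
  aeval f p / aeval f q

variable {p q : MvPolynomial σ k} {f : σ → K}

lemma derivation_ratioAt [Fintype σ] (δ : Derivation k K K) :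
    δ (ratioAt p q f) = (∑ j, aeval f (mvWronskian j p q) * δ (f j)) / aeval f q ^ 2 := by
  have hnum : ∑ j, aeval f (mvWronskian j p q) * δ (f j) =
      aeval f q * δ (aeval f p) - aeval f p * δ (aeval f q) := by
    simp only [mvWronskian, derivation_aeval, smul_eq_mul, map_sub, map_mul, sub_mul,
      Finset.sum_sub_distrib, Finset.mul_sum, mul_assoc]
  rw [hnum, ratioAt, Derivation.leibniz_div]
  simp only [smul_eq_mul, inv_pow, div_eq_inv_mul]

lemma derivation_ratioAt_eq_zero [Finite σ] {δ : Derivation k K K}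
    (h : ∀ j, mvWronskian j p q = 0 ∨ δ (f j) = 0) : δ (ratioAt p q f) = 0 := by
  cases nonempty_fintype σ
  rw [derivation_ratioAt, Finset.sum_eq_zero, zero_div]
  rintro j -
  rcases h j with hj | hj <;> simp [hj]

lemma derivation_eq_zero_of_derivation_ratioAt_eq_zero [Finite σ] {δ : Derivation k K K} {i : σ}
    (hf : AlgebraicIndependent k f) (hi : mvWronskian i p q ≠ 0)
    (hne : ∀ j ≠ i, mvWronskian j p q = 0 ∨ δ (f j) = 0) (h : δ (ratioAt p q f) = 0) :
    δ (f i) = 0 := by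
  cases nonempty_fintype σ
  have eval_ne_zero {r : MvPolynomial σ k} (hr : r ≠ 0) : aeval f r ≠ 0 :=
    fun h0 ↦ hr (algebraicIndependent_iff.1 hf r h0)
  have hq : q ≠ 0 := by rintro rfl; simp [mvWronskian] at hi
  rw [derivation_ratioAt, Finset.sum_eq_single i, div_eq_zero_iff, mul_eq_zero] at h
  · exact (h.resolve_right (pow_ne_zero 2 (eval_ne_zero hq))).resolve_left (eval_ne_zero hi)
  · intro j _ hj
    rcases hne j hj with hj | hj <;> simp [hj]
  · simp

lemma exists_ratioAt_eq_algebraMap [CharZero k] (h : ∀ i, mvWronskian i p q = 0) :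
    ∃ c : k, ratioAt p q f = algebraMap k K c := by
  by_cases hq : aeval f q = 0
  · exact ⟨0, by simp [ratioAt, hq]⟩
  · obtain ⟨c, rfl⟩ := exists_eq_C_mul_of_forall_mvWronskian_eq_zero
      (by rintro rfl; simp at hq) h
    exact ⟨c, by simp [ratioAt, hq]⟩

variable [CharZero k] [Finite σ] [DecidableEq σ] {d : σ → Derivation k K K}

namespace IsDual

lemma mvWronskian_eq_zero (hd : IsDual d f) {i : σ} (h : d i (ratioAt p q f) = 0) :
    mvWronskian i p q = 0 := by
  by_contra hi
  have := derivation_eq_zero_of_derivation_ratioAt_eq_zero hd.algebraicIndependent hi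
    (fun j hj ↦ .inr (hd.apply_of_ne hj.symm)) h
  simp [hd.apply_self] at this

lemma exists_ratioAt_eq_algebraMap (hd : IsDual d f) (h : ∀ i, d i (ratioAt p q f) = 0) :
    ∃ c : k, ratioAt p q f = algebraMap k K c :=
  _root_.exists_ratioAt_eq_algebraMap fun i ↦ hd.mvWronskian_eq_zero (h i)

/-- Applying `δ` to `hinv` leaves on the right only the term carrying `δ ((f i)⁻¹ * w)`. -/
lemma derivation_eq_zero_of_ratioAt_update_eq (hd : IsDual d f) {i : σ} {w : K} (hw : w ≠ 0)
    (hiw : d i w = 0)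
    (hinv : ratioAt p q f = ratioAt p q (Function.update f i ((f i)⁻¹ * w)))
    (hi : mvWronskian i p q ≠ 0) {δ : Derivation k K K} (hδ : δ (f i) = 0)
    (hne : ∀ j ≠ i, mvWronskian j p q = 0 ∨ δ (f j) = 0) : δ w = 0 := by
  have hindep : AlgebraicIndependent k (Function.update f i ((f i)⁻¹ * w)) := by
    apply hd.algebraicIndependent_update
    simp [Derivation.leibniz, Derivation.leibniz_inv, hiw, hd.apply_self, hd.ne_zero, hw]
  have hleft : δ (ratioAt p q f) = 0 := by
    refine derivation_ratioAt_eq_zero fun j ↦ ?_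
    rcases eq_or_ne j i with rfl | hj
    · exact .inr hδ
    · exact hne j hj
  rw [hinv] at hleft
  have hright := derivation_eq_zero_of_derivation_ratioAt_eq_zero hindep hi
    (fun j hj ↦ by simpa [hj] using hne j hj) hleft
  simpa [Derivation.leibniz, Derivation.leibniz_inv, hδ, hd.ne_zero] using hright

end IsDual

end Ratio

lemma Xv_ne_zero (i : Fin 3) : Xv i ≠ 0 := by
  simp [Xv]

lemma lratio_eq_ratioAt (p : MvPolynomial (Fin 2) ℚ) (mp np : ℕ) (q : MvPolynomial (Fin 2) ℚ)
    (mq nq : ℕ) {a b : Fld} (ha : a ≠ 0) (hb : b ≠ 0) :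
    lratio p mp np q mq nq a b =
      ratioAt (p * X 0 ^ mq * X 1 ^ nq) (q * X 0 ^ mp * X 1 ^ np) ![a, b] := by
  simp only [lratio, lv, ratioAt, map_mul, map_pow, aeval_X, Matrix.cons_val_zero,
    Matrix.cons_val_one]
  field_simp

lemma update_vecCons_zero {α : Type*} (a b c : α) :
    Function.update ![a, b] 0 c = ![c, b] :=
  Fin.update_cons_zero ..

lemma update_vecCons_one {α : Type*} (a b c : α) :
    Function.update ![a, b] 1 c = ![a, c] := by
  ext i; fin_cases i <;> rfl

theorem stmt12_general {k K : Type*} [Field k] [CharZero k] [Field K] [Algebra k K]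
    [Algebra (MvPolynomial (Fin 3) k) K] [IsScalarTower k (MvPolynomial (Fin 3) k) K]
    [IsFractionRing (MvPolynomial (Fin 3) k) K] {x : Fin 3 → K}
    (hx : ∀ i, x i = algebraMap (MvPolynomial (Fin 3) k) K (X i))
    {aN aD bN bD cN cD : MvPolynomial (Fin 2) k}
    (hab : ratioAt aN aD ![x 1, x 2] =
      ratioAt aN aD ![(x 1)⁻¹ * ratioAt bN bD ![x 0, x 2], x 2])
    (hac : ratioAt aN aD ![x 1, x 2] =
      ratioAt aN aD ![x 1, (x 2)⁻¹ * ratioAt cN cD ![x 0, x 1]])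
    (ha : ¬∃ q : k, ratioAt aN aD ![x 1, x 2] = algebraMap k K q)
    (hb : ¬∃ q : k, ratioAt bN bD ![x 0, x 2] = algebraMap k K q)
    (hc : ¬∃ q : k, ratioAt cN cD ![x 0, x 1] = algebraMap k K q) :
    mvWronskian 0 bN bD = 0 ∧ mvWronskian 0 cN cD = 0 := by
  obtain ⟨d, hd⟩ := exists_isDual_X (σ := Fin 3) (R := k) (K := K)
  rw [← funext hx] at hd
  have hyz : IsDual ![d 1, d 2] ![x 1, x 2] := hd.pair (by decide)
  have hxz : IsDual ![d 0, d 2] ![x 0, x 2] := hd.pair (by decide)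
  have hxy : IsDual ![d 0, d 1] ![x 0, x 1] := hd.pair (by decide)
  replace hab := hab.trans (congrArg _ (update_vecCons_zero (x 1) _ _).symm)
  replace hac := hac.trans (congrArg _ (update_vecCons_one _ (x 2) _).symm)
  set b := ratioAt bN bD ![x 0, x 2]
  set c := ratioAt cN cD ![x 0, x 1]
  have hb0 : b ≠ 0 := fun h ↦ hb ⟨0, by rw [map_zero, h]⟩
  have hc0 : c ≠ 0 := fun h ↦ hc ⟨0, by rw [map_zero, h]⟩
  have hb1 : d 1 b = 0 := derivation_ratioAt_eq_zero (by simp [Fin.forall_fin_two, hd.apply_of_ne])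
  have hc2 : d 2 c = 0 := derivation_ratioAt_eq_zero (by simp [Fin.forall_fin_two, hd.apply_of_ne])
  have d_b {i : Fin 3} (hi : i ≠ 1) (hy : mvWronskian 0 aN aD ≠ 0)
      (hz : mvWronskian 1 aN aD = 0 ∨ i ≠ 2) : d i b = 0 :=
    hyz.derivation_eq_zero_of_ratioAt_update_eq (i := 0) hb0 hb1 hab hy (hd.apply_of_ne hi)
      (by simpa [Fin.forall_fin_two] using hz.imp_right hd.apply_of_ne)
  have d_c {i : Fin 3} (hi : i ≠ 2) (hz : mvWronskian 1 aN aD ≠ 0)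
      (hy : mvWronskian 0 aN aD = 0 ∨ i ≠ 1) : d i c = 0 :=
    hyz.derivation_eq_zero_of_ratioAt_update_eq (i := 1) hc0 hc2 hac hz (hd.apply_of_ne hi)
      (by simpa [Fin.forall_fin_two] using hy.imp_right hd.apply_of_ne)
  have hy : mvWronskian 0 aN aD ≠ 0 := fun hy ↦
    have hz : mvWronskian 1 aN aD ≠ 0 := fun hz ↦
      ha (exists_ratioAt_eq_algebraMap (Fin.forall_fin_two.2 ⟨hy, hz⟩))
    hc (hxy.exists_ratioAt_eq_algebraMap (Fin.forall_fin_two.2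
      ⟨d_c (i := 0) (by decide) hz (.inl hy), d_c (i := 1) (by decide) hz (.inl hy)⟩))
  have hz : mvWronskian 1 aN aD ≠ 0 := fun hz ↦
    hb (hxz.exists_ratioAt_eq_algebraMap (Fin.forall_fin_two.2
      ⟨d_b (i := 0) (by decide) hy (.inl hz), d_b (i := 2) (by decide) hy (.inl hz)⟩))
  exact ⟨hxz.mvWronskian_eq_zero (i := 0) (d_b (i := 0) (by decide) hy (.inr (by decide))),
    hxy.mvWronskian_eq_zero (i := 0) (d_c (i := 0) (by decide) hz (.inr (by decide)))⟩

/-- Let `P(x,y,z) = x⁻¹A₋ + A₀ + xA₊ = y⁻¹B₋ + B₀ + yB₊ = z⁻¹C₋ + C₀ + zC₊` with all six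
coefficient Laurent polynomials nonzero, suppose `φ_x∘φ_y = φ_y∘φ_x` and
`φ_x∘φ_z = φ_z∘φ_x` (the four substitution-invariance identities below), and suppose none
of `A₋/A₊`, `B₋/B₊`, `C₋/C₊` is constant. Then `∂/∂x (B₋/B₊) = 0` and `∂/∂x (C₋/C₊) = 0`:
the vanishing of the `x`-derivative of the ratio `B₋/B₊ = (bM·x^{bPx}z^{bPz})/(bP·x^{bMx}z^{bMz})`
is expressed by the vanishing of the numerator `q·∂p - p·∂q` of the quotient rule, and
similarly for `C₋/C₊`. -/
theorem stmt12
    (aM aP a0 bM bP b0 cM cP c0 : MvPolynomial (Fin 2) ℚ)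
    (aMy aMz aPy aPz a0y a0z bMx bMz bPx bPz b0x b0z cMx cMy cPx cPy c0x c0y : ℕ)
    (P : Fld)
    (hA : P = (Xv 0)⁻¹ * lv aM aMy aMz (Xv 1) (Xv 2) + lv a0 a0y a0z (Xv 1) (Xv 2)
            + Xv 0 * lv aP aPy aPz (Xv 1) (Xv 2))
    (hB : P = (Xv 1)⁻¹ * lv bM bMx bMz (Xv 0) (Xv 2) + lv b0 b0x b0z (Xv 0) (Xv 2)
            + Xv 1 * lv bP bPx bPz (Xv 0) (Xv 2))
    (hC : P = (Xv 2)⁻¹ * lv cM cMx cMy (Xv 0) (Xv 1) + lv c0 c0x c0y (Xv 0) (Xv 1)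
            + Xv 2 * lv cP cPx cPy (Xv 0) (Xv 1))
    (hAM : lv aM aMy aMz (Xv 1) (Xv 2) ≠ 0) (hAP : lv aP aPy aPz (Xv 1) (Xv 2) ≠ 0)
    (hBM : lv bM bMx bMz (Xv 0) (Xv 2) ≠ 0) (hBP : lv bP bPx bPz (Xv 0) (Xv 2) ≠ 0)
    (hCM : lv cM cMx cMy (Xv 0) (Xv 1) ≠ 0) (hCP : lv cP cPx cPy (Xv 0) (Xv 1) ≠ 0)
    (hcom1 : lratio aM aMy aMz aP aPy aPz (Xv 1) (Xv 2) =
      lratio aM aMy aMz aP aPy aPz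
        ((Xv 1)⁻¹ * lratio bM bMx bMz bP bPx bPz (Xv 0) (Xv 2)) (Xv 2))
    (hcom2 : lratio bM bMx bMz bP bPx bPz (Xv 0) (Xv 2) =
      lratio bM bMx bMz bP bPx bPz
        ((Xv 0)⁻¹ * lratio aM aMy aMz aP aPy aPz (Xv 1) (Xv 2)) (Xv 2))
    (hcom3 : lratio aM aMy aMz aP aPy aPz (Xv 1) (Xv 2) =
      lratio aM aMy aMz aP aPy aPz (Xv 1)
        ((Xv 2)⁻¹ * lratio cM cMx cMy cP cPx cPy (Xv 0) (Xv 1)))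
    (hcom4 : lratio cM cMx cMy cP cPx cPy (Xv 0) (Xv 1) =
      lratio cM cMx cMy cP cPx cPy
        ((Xv 0)⁻¹ * lratio aM aMy aMz aP aPy aPz (Xv 1) (Xv 2)) (Xv 1))
    (hncA : ¬∃ q : ℚ, lratio aM aMy aMz aP aPy aPz (Xv 1) (Xv 2) = algebraMap ℚ Fld q)
    (hncB : ¬∃ q : ℚ, lratio bM bMx bMz bP bPx bPz (Xv 0) (Xv 2) = algebraMap ℚ Fld q)
    (hncC : ¬∃ q : ℚ, lratio cM cMx cMy cP cPx cPy (Xv 0) (Xv 1) = algebraMap ℚ Fld q) :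
    ((bP * X 0 ^ bMx * X 1 ^ bMz) * pderiv 0 (bM * X 0 ^ bPx * X 1 ^ bPz)
      - (bM * X 0 ^ bPx * X 1 ^ bPz) * pderiv 0 (bP * X 0 ^ bMx * X 1 ^ bMz) = 0) ∧
    ((cP * X 0 ^ cMx * X 1 ^ cMy) * pderiv 0 (cM * X 0 ^ cPx * X 1 ^ cPy)
      - (cM * X 0 ^ cPx * X 1 ^ cPy) * pderiv 0 (cP * X 0 ^ cMx * X 1 ^ cMy) = 0) := by
  have hb : lratio bM bMx bMz bP bPx bPz (Xv 0) (Xv 2) ≠ 0 := div_ne_zero hBM hBP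
  have hc : lratio cM cMx cMy cP cPx cPy (Xv 0) (Xv 1) ≠ 0 := div_ne_zero hCM hCP
  simp only [lratio_eq_ratioAt, ne_eq, Xv_ne_zero, not_false_eq_true] at hb hc
  simp only [lratio_eq_ratioAt, ne_eq, Xv_ne_zero, not_false_eq_true, mul_eq_zero, inv_eq_zero,
    or_self, hb, hc] at hcom1 hcom3 hncA hncB hncC
  exact stmt12_general (fun _ ↦ rfl) hcom1 hcom3 hncA hncB hncC
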